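/- Fix H ∈ (0, 1/2). Given d₁ > 2, there exist d₀ > d₁ and δ₀ > 0 such that for every d₂ ∈ [d₀, ∞) and every t ∈ ℝ one has b_{d₂}(t) − b_{d₁}(t) ≥ δ₀; in particular inf over t ∈ ℝ of (b_{d₂}(t) − b_{d₁}(t)) ≥ δ₀ > 0. -/

import Mathlib

open MeasureTheory

/-- Inverse hyperbolic cosine: the inverse of `cosh` restricted to `[1, ∞)`. -/
noncomputable def arcosh (x : ℝ) : ℝ := Real.log (x + Real.sqrt (x ^ 2 - 1))

/-- The neck parameter `η_d` of the `H`-catenoid `𝒞^H_d`. -/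
noncomputable def eta (H d : ℝ) : ℝ :=
  arcosh ((2 * d * H + Real.sqrt (1 - 4 * H ^ 2 + d ^ 2)) / (1 - 4 * H ^ 2))

/-- The height function `λ_d(ρ)` of the generating curve of the `H`-catenoid. -/
noncomputable def lam (H d ρ : ℝ) : ℝ :=
  ∫ r in eta H d..ρ,
    (d + 2 * H * Real.cosh r) /
      Real.sqrt (Real.sinh r ^ 2 - (d + 2 * H * Real.cosh r) ^ 2)

/-!
Up to a bounded error, the height function `λ_d` is linear, `λ_d(ρ) ≈ k (ρ - η_d)`, with a slope
`k = 2H / √(1 - 4H²) > 0` that does not depend on `d`. Inverting, `b_{d₂}(t) - b_{d₁}(t)` stays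
within a bounded distance of `η_{d₂} - η_{d₁}`, uniformly in `t` and `d₂`, and `η_d → ∞` as `d → ∞`.

For the error bound put `S = √(1 - 4H² + d²)` and `w = ((1 - 4H²) cosh r - 2dH) / S`. The integrand
of `λ_d` becomes `(2H w + d / S) / √(w² - 1) / √(1 - 4H²)`, which differs from `k` by at most a
constant times `1 / √(w² - 1)`. Since `w` is at least an exponential `exp (β (r - η_d))`, this error
is dominated by `1 / √(exp (2β (r - η_d)) - 1)`, which an `arctan` integrates to at most `π / (2β)`.
The rate `β` is a multiple of `tanh η_d`, so it is bounded below as long as `η_d` is.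
-/

open Real Set Filter

section Hyperbolic

theorem tanh_strictMono : StrictMono tanh := fun x y hxy ↦ by
  rw [← artanh_lt_artanh_iff ⟨neg_one_lt_tanh x, tanh_lt_one x⟩ ⟨neg_one_lt_tanh y, tanh_lt_one y⟩]
  simpa only [artanh_tanh] using hxy

theorem tanh_pos_of_pos {x : ℝ} (hx : 0 < x) : 0 < tanh x :=
  tanh_zero ▸ tanh_strictMono hx

theorem cosh_mul_exp_tanh_mul_le_cosh_add (x s : ℝ) :
    cosh x * exp (tanh x * s) ≤ cosh (x + s) :=
  calc cosh x * exp (tanh x * s) ≤ cosh x * (cosh s + tanh x * sinh s) := by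
        gcongr
        exact exp_mul_le_cosh_add_mul_sinh (abs_tanh_lt_one x).le s
    _ = cosh (x + s) := by
        rw [cosh_add, tanh_eq_sinh_div_cosh]
        field_simp

theorem cosh_le_exp_of_nonneg {x : ℝ} (hx : 0 ≤ x) : cosh x ≤ exp x := by
  linarith [cosh_add_sinh x, sinh_nonneg_iff.2 hx]

end Hyperbolic

section Comparison

variable {a b c : ℝ}

theorem hasDerivAt_arctan_sqrt_exp_sub_one {r : ℝ} (hc : 0 < c) (hr : a < r) :
    HasDerivAt (fun r ↦ 2 / c * arctan √(exp (c * (r - a)) - 1))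
      (1 / √(exp (c * (r - a)) - 1)) r := by
  have hpos : 0 < exp (c * (r - a)) - 1 := by
    rw [sub_pos, one_lt_exp_iff]
    exact mul_pos hc (sub_pos.2 hr)
  have hexp : HasDerivAt (fun r ↦ exp (c * (r - a)) - 1) (exp (c * (r - a)) * (c * 1)) r :=
    ((((hasDerivAt_id' r).sub_const a).const_mul c).exp).sub_const 1
  refine ((hexp.sqrt hpos.ne').arctan.const_mul (2 / c)).congr_deriv ?_
  rw [sq_sqrt hpos.le]
  have := sqrt_pos.2 hpos
  field_simp
  ring

theorem continuous_arctan_sqrt_exp_sub_one (a c : ℝ) :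
    Continuous fun r ↦ 2 / c * arctan √(exp (c * (r - a)) - 1) := by
  fun_prop

theorem intervalIntegrable_one_div_sqrt_exp_sub_one (hc : 0 < c) (hab : a ≤ b) :
    IntervalIntegrable (fun r ↦ 1 / √(exp (c * (r - a)) - 1)) volume a b := by
  refine intervalIntegral.intervalIntegrable_deriv_of_nonneg
    (continuous_arctan_sqrt_exp_sub_one a c).continuousOn (fun r hr ↦ ?_) (fun r _ ↦ by positivity)
  rw [min_eq_left hab] at hr
  exact hasDerivAt_arctan_sqrt_exp_sub_one hc hr.1

theorem integral_one_div_sqrt_exp_sub_one_le (hc : 0 < c) (hab : a ≤ b) :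
    ∫ r in a..b, 1 / √(exp (c * (r - a)) - 1) ≤ π / c := by
  rw [intervalIntegral.integral_eq_sub_of_hasDerivAt_of_le hab
    (continuous_arctan_sqrt_exp_sub_one a c).continuousOn
    (fun r hr ↦ hasDerivAt_arctan_sqrt_exp_sub_one hc hr.1)
    (intervalIntegrable_one_div_sqrt_exp_sub_one hc hab)]
  calc 2 / c * arctan √(exp (c * (b - a)) - 1) - 2 / c * arctan √(exp (c * (a - a)) - 1)
      = 2 / c * arctan √(exp (c * (b - a)) - 1) := by simp
    _ ≤ 2 / c * (π / 2) := by
        gcongr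
        exact (arctan_lt_pi_div_two _).le
    _ = π / c := by ring

theorem abs_integral_sub_le_of_abs_sub_le_div_sqrt_exp_sub_one {f : ℝ → ℝ} {k M : ℝ}
    (hf : Measurable f) (hc : 0 < c) (hM : 0 ≤ M) (hab : a ≤ b)
    (hfk : ∀ r, a < r → |f r - k| ≤ M * (1 / √(exp (c * (r - a)) - 1))) :
    |(∫ r in a..b, f r) - k * (b - a)| ≤ M * (π / c) := by
  have hbound : IntervalIntegrable (fun r ↦ M * (1 / √(exp (c * (r - a)) - 1))) volume a b :=
    (intervalIntegrable_one_div_sqrt_exp_sub_one hc hab).const_mul M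
  have hdiff : IntervalIntegrable (fun r ↦ f r - k) volume a b := by
    refine hbound.mono_fun' (hf.sub_const k).aestronglyMeasurable ?_
    filter_upwards [ae_restrict_mem measurableSet_uIoc] with r hr
    rw [uIoc_of_le hab] at hr
    exact hfk r hr.1
  have hint : IntervalIntegrable f volume a b := by
    simpa only [sub_add_cancel] using hdiff.add (intervalIntegrable_const (c := k))
  calc |(∫ r in a..b, f r) - k * (b - a)| = |∫ r in a..b, (f r - k)| := by
        rw [intervalIntegral.integral_sub hint intervalIntegrable_const,
          intervalIntegral.integral_const, smul_eq_mul, mul_comm k]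
    _ ≤ ∫ r in a..b, M * (1 / √(exp (c * (r - a)) - 1)) := by
        rw [← norm_eq_abs]
        exact intervalIntegral.norm_integral_le_of_norm_le hab
          (.of_forall fun r hr ↦ hfk r hr.1) hbound
    _ ≤ M * (π / c) := by
        rw [intervalIntegral.integral_const_mul]
        gcongr
        exact integral_one_div_sqrt_exp_sub_one_le hc hab

theorem abs_add_div_sqrt_sq_sub_one_sub_le {w : ℝ} (hw : 1 < w) (p q : ℝ) :
    |(p * w + q) / √(w ^ 2 - 1) - p| ≤ (|p| + |q|) / √(w ^ 2 - 1) := by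
  have hpos : 0 < w ^ 2 - 1 := by nlinarith
  have hsqrt_le : √(w ^ 2 - 1) ≤ w := sqrt_le_iff.2 ⟨by linarith, by linarith⟩
  have hle_sqrt : w - 1 ≤ √(w ^ 2 - 1) := le_sqrt_of_sq_le (by nlinarith)
  have hsqrt : 0 < √(w ^ 2 - 1) := sqrt_pos.2 hpos
  rw [div_sub' hsqrt.ne', abs_div, abs_of_pos hsqrt]
  gcongr
  calc |p * w + q - √(w ^ 2 - 1) * p| = |p * (w - √(w ^ 2 - 1)) + q| := by ring_nf
    _ ≤ |p * (w - √(w ^ 2 - 1))| + |q| := abs_add_le _ _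
    _ = |p| * (w - √(w ^ 2 - 1)) + |q| := by rw [abs_mul, abs_of_nonneg (sub_nonneg.2 hsqrt_le)]
    _ ≤ |p| + |q| := by
        gcongr
        exact mul_le_of_le_one_right (abs_nonneg p) (by linarith)

theorem abs_div_sqrt_add_sq_le_one (ha : 0 ≤ a) (d : ℝ) : |d / √(a + d ^ 2)| ≤ 1 := by
  rw [abs_div, abs_of_nonneg (sqrt_nonneg _)]
  exact div_le_one_of_le₀ (abs_le_sqrt (by linarith)) (sqrt_nonneg _)

end Comparison

section Neck

variable {H : ℝ}

theorem one_sub_four_mul_sq_pos (hH : |H| < 1 / 2) : 0 < 1 - 4 * H ^ 2 := by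
  nlinarith [sq_abs H, abs_nonneg H]

theorem one_le_neck_cosh (hH : |H| < 1 / 2) (d : ℝ) :
    1 ≤ (2 * d * H + √(1 - 4 * H ^ 2 + d ^ 2)) / (1 - 4 * H ^ 2) := by
  have ha := one_sub_four_mul_sq_pos hH
  have hsqrt : 1 - 4 * H ^ 2 - 2 * d * H ≤ √(1 - 4 * H ^ 2 + d ^ 2) :=
    le_sqrt_of_sq_le (by linarith [mul_nonneg ha.le (sq_nonneg (d + 2 * H))])
  rw [one_le_div ha]
  linarith

-- `arcosh` unfolds to `Real.arcosh`, so the lemmas on the latter apply directly to `eta`.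
theorem cosh_eta (hH : |H| < 1 / 2) (d : ℝ) :
    cosh (eta H d) = (2 * d * H + √(1 - 4 * H ^ 2 + d ^ 2)) / (1 - 4 * H ^ 2) :=
  cosh_arcosh (one_le_neck_cosh hH d)

theorem eta_nonneg (hH : |H| < 1 / 2) (d : ℝ) : 0 ≤ eta H d :=
  arcosh_nonneg (one_le_neck_cosh hH d)

theorem eta_pos {d : ℝ} (hH : |H| < 1 / 2) (hd : d ≠ -2 * H) : 0 < eta H d := by
  have ha := one_sub_four_mul_sq_pos hH
  refine (eta_nonneg hH d).lt_of_ne' fun heta ↦ hd ?_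
  have hcosh := cosh_eta hH d
  rw [heta, cosh_zero, eq_div_iff ha.ne'] at hcosh
  have hsqrt : √(1 - 4 * H ^ 2 + d ^ 2) = 1 - 4 * H ^ 2 - 2 * d * H := by linarith
  have hsq : (1 - 4 * H ^ 2 - 2 * d * H) ^ 2 = 1 - 4 * H ^ 2 + d ^ 2 := by
    rw [← hsqrt, sq_sqrt (by positivity)]
  have hzero : (1 - 4 * H ^ 2) * (d + 2 * H) ^ 2 = 0 := by linear_combination -hsq
  have := pow_eq_zero_iff two_ne_zero |>.1 ((mul_eq_zero.1 hzero).resolve_left ha.ne')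
  linarith

theorem half_le_cosh_eta {d : ℝ} (hH : |H| < 1 / 2) (hd : 0 ≤ d) : d / 2 ≤ cosh (eta H d) := by
  have ha := one_sub_four_mul_sq_pos hH
  have hsqrt : d ≤ √(1 - 4 * H ^ 2 + d ^ 2) := le_sqrt_of_sq_le (by linarith)
  have hHd : 0 ≤ d * (2 * H + (1 + 4 * H ^ 2) / 2) := by
    refine mul_nonneg hd ?_
    nlinarith [sq_nonneg (2 * H + 1)]
  rw [cosh_eta hH, div_le_div_iff₀ two_pos ha]
  linarith

theorem tendsto_eta_atTop (hH : |H| < 1 / 2) : Tendsto (eta H) atTop atTop := by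
  have hlog : Tendsto (fun d : ℝ ↦ log (d / 2)) atTop atTop :=
    tendsto_log_atTop.comp (tendsto_id.atTop_div_const two_pos)
  refine tendsto_atTop_mono' atTop ?_ hlog
  filter_upwards [eventually_gt_atTop 0] with d hd
  exact (log_le_iff_le_exp (half_pos hd)).2 <|
    (half_le_cosh_eta hH hd.le).trans (cosh_le_exp_of_nonneg (eta_nonneg hH d))

end Neck

section Height

variable {H : ℝ}

/-- The affine function of `cosh r`, equal to `1` at the neck `r = η_d`, in terms of which the
radicand in the definition of `λ_d` is a multiple of `w ^ 2 - 1`. -/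
noncomputable def normalizedCosh (H d r : ℝ) : ℝ :=
  ((1 - 4 * H ^ 2) * cosh r - 2 * d * H) / √(1 - 4 * H ^ 2 + d ^ 2)

/-- The limit of `λ_d'` at infinity, which is the same for all `d`. -/
noncomputable def heightSlope (H : ℝ) : ℝ := 2 * H / √(1 - 4 * H ^ 2)

theorem heightSlope_pos (hH0 : 0 < H) (hH : |H| < 1 / 2) : 0 < heightSlope H :=
  div_pos (by positivity) (sqrt_pos.2 (one_sub_four_mul_sq_pos hH))

theorem lam_integrand_eq (hH : |H| < 1 / 2) (d r : ℝ) :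
    (d + 2 * H * cosh r) / √(sinh r ^ 2 - (d + 2 * H * cosh r) ^ 2) =
      (2 * H * normalizedCosh H d r + d / √(1 - 4 * H ^ 2 + d ^ 2)) /
        √(normalizedCosh H d r ^ 2 - 1) / √(1 - 4 * H ^ 2) := by
  have ha := one_sub_four_mul_sq_pos hH
  have hS : 0 < √(1 - 4 * H ^ 2 + d ^ 2) := sqrt_pos.2 (by positivity)
  have hSsq : √(1 - 4 * H ^ 2 + d ^ 2) ^ 2 = 1 - 4 * H ^ 2 + d ^ 2 := sq_sqrt (by positivity)
  have hw : √(1 - 4 * H ^ 2 + d ^ 2) * normalizedCosh H d r =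
      (1 - 4 * H ^ 2) * cosh r - 2 * d * H := mul_div_cancel₀ _ hS.ne'
  set S := √(1 - 4 * H ^ 2 + d ^ 2)
  set w := normalizedCosh H d r
  have hnum : d + 2 * H * cosh r = S * (2 * H * w + d / S) / (1 - 4 * H ^ 2) := by
    rw [eq_div_iff ha.ne', mul_add, mul_div_cancel₀ _ hS.ne']
    linear_combination -2 * H * hw
  have hrad : sinh r ^ 2 - (d + 2 * H * cosh r) ^ 2 = S ^ 2 * (w ^ 2 - 1) / (1 - 4 * H ^ 2) := by
    rw [sinh_sq, eq_div_iff ha.ne']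
    linear_combination hSsq - (S * w + ((1 - 4 * H ^ 2) * cosh r - 2 * d * H)) * hw
  have hden : √(sinh r ^ 2 - (d + 2 * H * cosh r) ^ 2) =
      S * √(w ^ 2 - 1) / √(1 - 4 * H ^ 2) := by
    rw [hrad, sqrt_div' _ ha.le, sqrt_mul (sq_nonneg S), sqrt_sq hS.le]
  calc (d + 2 * H * cosh r) / √(sinh r ^ 2 - (d + 2 * H * cosh r) ^ 2)
      = S * (2 * H * w + d / S) / (√(1 - 4 * H ^ 2) * √(1 - 4 * H ^ 2)) /
          (S * √(w ^ 2 - 1) / √(1 - 4 * H ^ 2)) := by rw [hden, hnum, mul_self_sqrt ha.le]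
    _ = (2 * H * w + d / S) / √(w ^ 2 - 1) / √(1 - 4 * H ^ 2) := by
        have := sqrt_pos.2 ha
        field_simp

theorem normalizedCosh_eta_add (hH : |H| < 1 / 2) (d s : ℝ) :
    normalizedCosh H d (eta H d + s) = 1 + (1 + 2 * H * (d / √(1 - 4 * H ^ 2 + d ^ 2))) *
      (cosh (eta H d + s) / cosh (eta H d) - 1) := by
  have ha := one_sub_four_mul_sq_pos hH
  have hS : 0 < √(1 - 4 * H ^ 2 + d ^ 2) := sqrt_pos.2 (by positivity)
  have hc : (1 - 4 * H ^ 2) * cosh (eta H d) = 2 * d * H + √(1 - 4 * H ^ 2 + d ^ 2) := by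
    rw [cosh_eta hH, mul_div_cancel₀ _ ha.ne']
  rw [normalizedCosh]
  set S := √(1 - 4 * H ^ 2 + d ^ 2)
  calc ((1 - 4 * H ^ 2) * cosh (eta H d + s) - 2 * d * H) / S
      = ((1 - 4 * H ^ 2) * cosh (eta H d) * (cosh (eta H d + s) / cosh (eta H d)) -
          2 * d * H) / S := by rw [mul_assoc (1 - _), mul_div_cancel₀ _ (cosh_pos _).ne']
    _ = ((2 * d * H + S) * (cosh (eta H d + s) / cosh (eta H d)) - 2 * d * H) / S := by rw [hc]
    _ = 1 + (1 + 2 * H * (d / S)) * (cosh (eta H d + s) / cosh (eta H d) - 1) := by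
        field_simp
        ring

theorem exp_tanh_eta_mul_le_normalizedCosh (hH : |H| < 1 / 2) (d : ℝ) {s : ℝ} (hs : 0 ≤ s) :
    exp ((1 - 2 * |H|) * tanh (eta H d) * s) ≤ normalizedCosh H d (eta H d + s) := by
  have ha := one_sub_four_mul_sq_pos hH
  have hfactor : 1 - 2 * |H| ≤ 1 + 2 * H * (d / √(1 - 4 * H ^ 2 + d ^ 2)) := by
    have hσ : |H * (d / √(1 - 4 * H ^ 2 + d ^ 2))| ≤ |H| := by
      rw [abs_mul]
      exact mul_le_of_le_one_right (abs_nonneg H) (abs_div_sqrt_add_sq_le_one ha.le d)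
    linarith [neg_abs_le (H * (d / √(1 - 4 * H ^ 2 + d ^ 2)))]
  have hratio : exp (tanh (eta H d) * s) ≤ cosh (eta H d + s) / cosh (eta H d) := by
    rw [le_div_iff₀' (cosh_pos _)]
    exact cosh_mul_exp_tanh_mul_le_cosh_add _ _
  have hratio_ge : 1 ≤ cosh (eta H d + s) / cosh (eta H d) := by
    rw [one_le_div (cosh_pos _), cosh_le_cosh, abs_of_nonneg (eta_nonneg hH d)]
    exact (le_add_of_nonneg_right hs).trans (le_abs_self _)
  calc exp ((1 - 2 * |H|) * tanh (eta H d) * s)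
      = (1 + (exp (tanh (eta H d) * s) - 1)) ^ (1 - 2 * |H|) := by
        rw [add_sub_cancel, ← exp_mul]
        ring_nf
    _ ≤ 1 + (1 - 2 * |H|) * (exp (tanh (eta H d) * s) - 1) :=
        rpow_one_add_le_one_add_mul_self (by linarith [exp_pos (tanh (eta H d) * s)])
          (by linarith) (by linarith [abs_nonneg H])
    _ ≤ 1 + (1 - 2 * |H|) * (cosh (eta H d + s) / cosh (eta H d) - 1) := by
        gcongr
        linarith
    _ ≤ 1 + (1 + 2 * H * (d / √(1 - 4 * H ^ 2 + d ^ 2))) *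
          (cosh (eta H d + s) / cosh (eta H d) - 1) := by
        gcongr
    _ = normalizedCosh H d (eta H d + s) := (normalizedCosh_eta_add hH d s).symm

theorem abs_lam_integrand_sub_heightSlope_le {d r η₀ : ℝ} (hH : |H| < 1 / 2) (hη₀ : 0 < η₀)
    (hη : η₀ ≤ eta H d) (hr : eta H d < r) :
    |(d + 2 * H * cosh r) / √(sinh r ^ 2 - (d + 2 * H * cosh r) ^ 2) - heightSlope H| ≤
      (2 * |H| + 1) / √(1 - 4 * H ^ 2) *
        (1 / √(exp (2 * (1 - 2 * |H|) * tanh η₀ * (r - eta H d)) - 1)) := by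
  have ha := one_sub_four_mul_sq_pos hH
  have hτ : 0 < tanh η₀ := tanh_pos_of_pos hη₀
  have hrη : 0 < r - eta H d := sub_pos.2 hr
  have hq : 0 < 1 - 2 * |H| := by linarith
  have hw : exp ((1 - 2 * |H|) * tanh η₀ * (r - eta H d)) ≤ normalizedCosh H d r :=
    calc _ ≤ exp ((1 - 2 * |H|) * tanh (eta H d) * (r - eta H d)) := by
          gcongr
          exact tanh_strictMono.monotone hη
      _ ≤ normalizedCosh H d (eta H d + (r - eta H d)) :=
          exp_tanh_eta_mul_le_normalizedCosh hH d hrη.le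
      _ = normalizedCosh H d r := by rw [add_sub_cancel]
  have hexp : 1 < exp ((1 - 2 * |H|) * tanh η₀ * (r - eta H d)) := one_lt_exp_iff.2 (by positivity)
  have hexp_sq : exp (2 * (1 - 2 * |H|) * tanh η₀ * (r - eta H d)) =
      exp ((1 - 2 * |H|) * tanh η₀ * (r - eta H d)) ^ 2 := by
    rw [← exp_nat_mul]
    push_cast
    ring_nf
  have hsqrt : 0 < √(exp ((1 - 2 * |H|) * tanh η₀ * (r - eta H d)) ^ 2 - 1) :=
    sqrt_pos.2 (by nlinarith)
  rw [lam_integrand_eq hH, heightSlope, ← sub_div, abs_div, abs_of_nonneg (sqrt_nonneg (1 - _)),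
    hexp_sq, mul_one_div, div_right_comm]
  gcongr
  calc _ ≤ (|2 * H| + |d / √(1 - 4 * H ^ 2 + d ^ 2)|) / √(normalizedCosh H d r ^ 2 - 1) :=
        abs_add_div_sqrt_sq_sub_one_sub_le (hexp.trans_le hw) _ _
    _ ≤ (2 * |H| + 1) / √(exp ((1 - 2 * |H|) * tanh η₀ * (r - eta H d)) ^ 2 - 1) := by
        rw [abs_mul, abs_two]
        gcongr
        exact abs_div_sqrt_add_sq_le_one ha.le d

theorem abs_lam_sub_heightSlope_mul_le {d ρ η₀ : ℝ} (hH : |H| < 1 / 2) (hη₀ : 0 < η₀)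
    (hη : η₀ ≤ eta H d) (hρ : eta H d ≤ ρ) :
    |lam H d ρ - heightSlope H * (ρ - eta H d)| ≤
      (2 * |H| + 1) / √(1 - 4 * H ^ 2) * (π / (2 * (1 - 2 * |H|) * tanh η₀)) := by
  have hτ : 0 < tanh η₀ := tanh_pos_of_pos hη₀
  have hq : 0 < 1 - 2 * |H| := by linarith
  exact abs_integral_sub_le_of_abs_sub_le_div_sqrt_exp_sub_one (by fun_prop) (by positivity)
    (by positivity) hρ fun r hr ↦ abs_lam_integrand_sub_heightSlope_le hH hη₀ hη hr

end Height

theorem stmt_16_general (H d₁ δ₀ : ℝ) (hH0 : 0 < H) (hH : H < 1 / 2) (hd₁ : d₁ ≠ -2 * H)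
    (g : ℝ → ℝ → ℝ)
    (hg : ∀ d : ℝ, d₁ ≤ d → ∀ t : ℝ, 0 ≤ t → eta H d ≤ g d t ∧ lam H d (g d t) = t) :
    ∃ d₀ : ℝ, d₁ < d₀ ∧ ∀ d₂ : ℝ, d₀ ≤ d₂ → ∀ t : ℝ, δ₀ ≤ g d₂ |t| - g d₁ |t| := by
  have hH' : |H| < 1 / 2 := by rwa [abs_of_pos hH0]
  have hk := heightSlope_pos hH0 hH'
  have hlam := fun {d ρ : ℝ} ↦
    abs_lam_sub_heightSlope_mul_le (d := d) (ρ := ρ) hH' (eta_pos hH' hd₁)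
  set C := (2 * |H| + 1) / √(1 - 4 * H ^ 2) * (π / (2 * (1 - 2 * |H|) * tanh (eta H d₁)))
  have hη := tendsto_eta_atTop hH'
  obtain ⟨d₀, hd₀⟩ := eventually_atTop.1 <| (eventually_gt_atTop d₁).and <|
    (hη.eventually_ge_atTop (eta H d₁)).and
      (hη.eventually_ge_atTop (eta H d₁ + 2 * C / heightSlope H + δ₀))
  refine ⟨d₀, (hd₀ d₀ le_rfl).1, fun d₂ hd₂ t ↦ ?_⟩
  obtain ⟨hd, hηle, hηfar⟩ := hd₀ d₂ hd₂
  obtain ⟨hg₁, hlam₁⟩ := hg d₁ le_rfl |t| (abs_nonneg t)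
  obtain ⟨hg₂, hlam₂⟩ := hg d₂ hd.le |t| (abs_nonneg t)
  have hlower := (abs_le.1 (hlam le_rfl hg₁)).1
  have hupper := (abs_le.1 (hlam hηle hg₂)).2
  rw [hlam₁] at hlower
  rw [hlam₂] at hupper
  have hgap : heightSlope H * (eta H d₂ - eta H d₁ - 2 * C / heightSlope H) ≤
      heightSlope H * (g d₂ |t| - g d₁ |t|) := by
    rw [mul_sub, mul_div_cancel₀ _ hk.ne']
    linarith
  linarith [le_of_mul_le_mul_left hgap hk]

/-- For each `d`, the function `t ↦ g d t` encodes the inverse `λ_d^{-1} : [0, ∞) → [η_d, ∞)`,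
and `b_d(t) = λ_d^{-1}(|t|) = g d |t|`. -/
theorem stmt_16 (H d₁ : ℝ) (hH0 : 0 < H) (hH : H < 1 / 2) (hd₁ : 2 < d₁)
    (g : ℝ → ℝ → ℝ)
    (hg : ∀ d : ℝ, 2 < d → ∀ t : ℝ, 0 ≤ t → eta H d ≤ g d t ∧ lam H d (g d t) = t) :
    ∃ d₀ : ℝ, d₁ < d₀ ∧ ∃ δ₀ : ℝ, 0 < δ₀ ∧
      ∀ d₂ : ℝ, d₀ ≤ d₂ → ∀ t : ℝ, δ₀ ≤ g d₂ |t| - g d₁ |t| := by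
  obtain ⟨d₀, hd₀, hgap⟩ := stmt_16_general H d₁ 1 hH0 hH (by linarith) g
    fun d hd ↦ hg d (hd₁.trans_le hd)
  exact ⟨d₀, hd₀, 1, one_pos, hgap⟩
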